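/- Let n ≥ 2 and D_G(x‖y) = ∑_{i=1}^n ( ln(y_i/x_i) + x_i/y_i − 1 ) be the Itakura–Saito divergence on ℝ₊ⁿ. If r² ≤ ln 2 − ½ then the ball { y ∈ ℝ₊ⁿ : D_G(x‖y) ≤ r² } is convex for every x, and if r² > 2 ln 2 − 1 then this ball is nonconvex for every x. -/

import Mathlib

/-!
Rescaling each coordinate by the center turns the divergence into a separable sum `∑ i, g (t i)`
with `g t = log t + t⁻¹ - 1 ≥ 0`, where `g` is convex on `(0, 2]`, strictly concave on `[2, ∞)`, and
`g 2 = log 2 - 1 / 2`. If `r² ≤ g 2`, then every term of the sum is at most `g 2`, so the whole ball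
lies in the box `(0, 2]ⁿ`, on which the sum is convex. If `2 * g 2 < r²`, pick `b > 2` with
`g 2 + g b = r²`; the points `(2, b, 1, …, 1)` and `(b, 2, 1, …, 1)` lie in the ball, and by strict
concavity their midpoint has divergence `2 * g ((2 + b) / 2) > r²`.
-/

open Set Filter

section SeparableSum

variable {ι : Type*} [Fintype ι]

lemma convexOn_sum_apply {E : ι → Type*} [∀ i, AddCommMonoid (E i)] [∀ i, Module ℝ (E i)]
    {t : ∀ i, Set (E i)} {f : ∀ i, E i → ℝ} (hf : ∀ i, ConvexOn ℝ (t i) (f i)) :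
    ConvexOn ℝ (univ.pi t) fun y ↦ ∑ i, f i (y i) := by
  refine ⟨convex_pi fun i _ ↦ (hf i).1, fun y hy z hz a b ha hb hab ↦ ?_⟩
  calc ∑ i, f i ((a • y + b • z) i)
      ≤ ∑ i, (a • f i (y i) + b • f i (z i)) :=
        Finset.sum_le_sum fun i _ ↦ (hf i).2 (hy i (mem_univ i)) (hz i (mem_univ i)) ha hb hab
    _ = a • ∑ i, f i (y i) + b • ∑ i, f i (z i) := by
        rw [Finset.sum_add_distrib, Finset.smul_sum, Finset.smul_sum]

lemma convex_setOf_sum_apply_le {E : ι → Type*} [∀ i, AddCommMonoid (E i)] [∀ i, Module ℝ (E i)]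
    {s t : ∀ i, Set (E i)} {f : ∀ i, E i → ℝ} {r : ℝ} (hts : ∀ i, t i ⊆ s i)
    (hf : ∀ i, ConvexOn ℝ (t i) (f i)) (hf_nonneg : ∀ i, ∀ u ∈ s i, 0 ≤ f i u)
    (h_sublevel : ∀ i, ∀ u ∈ s i, f i u ≤ r → u ∈ t i) :
    Convex ℝ {y : ∀ i, E i | (∀ i, y i ∈ s i) ∧ ∑ i, f i (y i) ≤ r} := by
  convert! (convexOn_sum_apply hf).convex_le r using 1
  ext y
  refine ⟨fun ⟨hys, hyr⟩ ↦ ⟨fun i _ ↦ h_sublevel i _ (hys i) ?_, hyr⟩,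
    fun ⟨hyt, hyr⟩ ↦ ⟨fun i ↦ hts i (hyt i (mem_univ i)), hyr⟩⟩
  exact (Finset.single_le_sum (fun j _ ↦ hf_nonneg j _ (hys j)) (Finset.mem_univ i)).trans hyr

lemma two_mul_apply_midpoint_le_of_convex_setOf_sum_apply_le [Nontrivial ι] {E : Type*}
    [AddCommGroup E] [Module ℝ E] {s : Set E} {f : E → ℝ} {r : ℝ}
    (h_conv : Convex ℝ {y : ι → E | (∀ i, y i ∈ s) ∧ ∑ i, f (y i) ≤ r})
    {a b c : E} (ha : a ∈ s) (hb : b ∈ s) (hab : f a + f b ≤ r) (hc : c ∈ s) (hfc : f c = 0) :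
    2 * f (midpoint ℝ a b) ≤ r := by
  classical
  obtain ⟨i, j, hij⟩ := exists_pair_ne ι
  let y (u v : E) : ι → E := fun k ↦ if k = i then u else if k = j then v else c
  have sum_y (u v : E) : ∑ k, f (y u v k) = f u + f v := by
    rw [Fintype.sum_eq_add i j hij fun k hk ↦ by simp only [y, if_neg hk.1, if_neg hk.2, hfc]]
    simp only [y, if_true, if_neg hij.symm]
  have y_mem {u v : E} (hu : u ∈ s) (hv : v ∈ s) (k : ι) : y u v k ∈ s := by
    dsimp only [y]; split_ifs <;> assumption
  have y_midpoint : midpoint ℝ (y a b) (y b a) = y (midpoint ℝ a b) (midpoint ℝ a b) := by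
    ext k
    simp only [pi_midpoint_apply, y]
    split_ifs
    exacts [rfl, midpoint_comm b a, midpoint_self ℝ c]
  have h_mid := (h_conv.midpoint_mem ⟨y_mem ha hb, (sum_y a b).trans_le hab⟩
    ⟨y_mem hb ha, (sum_y b a).trans_le (by rwa [add_comm])⟩).2
  rwa [y_midpoint, sum_y, ← two_mul] at h_mid

end SeparableSum

/-- The one-variable generator of the Itakura–Saito divergence: each coordinate of `D_G(x‖y)`
contributes its value at the ratio `y i / x i`. -/
noncomputable def itakuraSaitoFun (t : ℝ) : ℝ := Real.log t + t⁻¹ - 1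

namespace itakuraSaitoFun

lemma apply_one : itakuraSaitoFun 1 = 0 := by
  simp [itakuraSaitoFun]

lemma apply_two : itakuraSaitoFun 2 = Real.log 2 - 1 / 2 := by
  unfold itakuraSaitoFun; ring

lemma nonneg {t : ℝ} (ht : 0 < t) : 0 ≤ itakuraSaitoFun t := by
  have := Real.one_sub_inv_le_log_of_pos ht
  unfold itakuraSaitoFun; linarith

lemma hasDerivAt {t : ℝ} (ht : t ≠ 0) : HasDerivAt itakuraSaitoFun (t⁻¹ - t⁻¹ ^ 2) t := by
  convert! ((Real.hasDerivAt_log ht).add (hasDerivAt_inv ht)).sub_const 1 using 1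
  rw [inv_pow, sub_eq_add_neg]

lemma continuousOn : ContinuousOn itakuraSaitoFun {0}ᶜ :=
  fun _ ht ↦ (hasDerivAt ht).continuousAt.continuousWithinAt

lemma strictMonoOn : StrictMonoOn itakuraSaitoFun (Ici 1) := by
  refine strictMonoOn_of_deriv_pos (convex_Ici 1)
    (continuousOn.mono fun t ht ↦ (zero_lt_one.trans_le ht).ne') fun t ht ↦ ?_
  rw [interior_Ici, mem_Ioi] at ht
  have ht0 : 0 < t := zero_lt_one.trans ht
  rw [(hasDerivAt ht0.ne').deriv, sub_pos]
  exact pow_lt_self_of_lt_one₀ (inv_pos.2 ht0) (inv_lt_one_of_one_lt₀ ht) one_lt_two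

lemma tendsto_atTop : Tendsto itakuraSaitoFun atTop atTop := by
  refine tendsto_atTop_mono' _ ?_ (tendsto_atTop_add_const_right _ (-1) Real.tendsto_log_atTop)
  filter_upwards [eventually_ge_atTop 0] with t ht
  have := inv_nonneg.2 ht
  unfold itakuraSaitoFun; linarith

-- In `u = t⁻¹` the derivative is `u - u ^ 2`, which increases for `u ≤ 1 / 2` and decreases after.
lemma convexOn : ConvexOn ℝ (Ioc 0 2) itakuraSaitoFun := by
  refine MonotoneOn.convexOn_of_deriv (convex_Ioc 0 2)
    (continuousOn.mono fun t ht ↦ ht.1.ne') ?_ ?_ <;> rw [interior_Ioc]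
  · exact fun t ht ↦ (hasDerivAt ht.1.ne').differentiableAt.differentiableWithinAt
  · intro a ha b hb hab
    rw [(hasDerivAt ha.1.ne').deriv, (hasDerivAt hb.1.ne').deriv]
    have h_inv : b⁻¹ ≤ a⁻¹ := inv_anti₀ ha.1 hab
    have h_half : 2⁻¹ < b⁻¹ := inv_strictAnti₀ hb.1 hb.2
    nlinarith

lemma strictConcaveOn : StrictConcaveOn ℝ (Ici 2) itakuraSaitoFun := by
  refine StrictAntiOn.strictConcaveOn_of_deriv (convex_Ici 2)
    (continuousOn.mono fun t ht ↦ (zero_lt_two.trans_le ht).ne') ?_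
  rw [interior_Ici]
  intro a ha b _ hab
  have ha0 : 0 < a := zero_lt_two.trans ha
  rw [(hasDerivAt ha0.ne').deriv, (hasDerivAt (ha0.trans hab).ne').deriv]
  have h_inv : b⁻¹ < a⁻¹ := inv_strictAnti₀ ha0 hab
  have h_half : a⁻¹ < 2⁻¹ := inv_strictAnti₀ two_pos ha
  nlinarith

lemma mem_Ioc_of_le {t : ℝ} (ht : 0 < t) (h : itakuraSaitoFun t ≤ Real.log 2 - 1 / 2) :
    t ∈ Ioc 0 2 := by
  refine ⟨ht, le_of_not_gt fun h_two ↦ h.not_gt ?_⟩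
  rw [← apply_two]
  exact strictMonoOn (mem_Ici.2 one_le_two) (mem_Ici.2 (one_le_two.trans h_two.le)) h_two

lemma exists_add_eq_and_lt_two_mul_midpoint {r : ℝ} (hr : 2 * Real.log 2 - 1 < r) :
    ∃ b > 0, itakuraSaitoFun 2 + itakuraSaitoFun b = r ∧
      r < 2 * itakuraSaitoFun (midpoint ℝ 2 b) := by
  have h_two : itakuraSaitoFun 2 < r - itakuraSaitoFun 2 := by linarith [apply_two]
  obtain ⟨b, hb, hbr⟩ := intermediate_value_Ioi
    (continuousOn.mono fun t (ht : 2 ≤ t) ↦ (zero_lt_two.trans_le ht).ne') tendsto_atTop h_two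
  refine ⟨b, zero_lt_two.trans hb, by linarith, ?_⟩
  have h_conc := strictConcaveOn.2 self_mem_Ici (mem_Ici_of_Ioi hb) hb.ne
    (half_pos one_pos) (half_pos one_pos) (add_halves 1)
  rw [midpoint_eq_smul_add, invOf_eq_inv, smul_add, ← one_div]
  simp only [smul_eq_mul] at h_conc ⊢
  linarith

end itakuraSaitoFun

section Ball

variable {ι : Type*} [Fintype ι] {x : ι → ℝ} {r : ℝ}

/-- The Itakura–Saito ball `{y ∈ ℝ₊ⁿ | D_G(x‖y) ≤ r}` with center `x`; as in the paper, `r` is the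
*squared* radius. -/
def itakuraSaitoBall (x : ι → ℝ) (r : ℝ) : Set (ι → ℝ) :=
  {y | (∀ i, 0 < y i) ∧ ∑ i, (Real.log (y i / x i) + x i / y i - 1) ≤ r}

lemma mem_itakuraSaitoBall_iff_div (hx : ∀ i, 0 < x i) {y : ι → ℝ} :
    y ∈ itakuraSaitoBall x r ↔
      (∀ i, (y / x) i ∈ Ioi 0) ∧ ∑ i, itakuraSaitoFun ((y / x) i) ≤ r := by
  simp only [itakuraSaitoBall, itakuraSaitoFun, mem_ofPred_eq, Pi.div_apply, mem_Ioi, inv_div,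
    div_pos_iff_of_pos_right (hx _)]

lemma convex_itakuraSaitoBall_iff (hx : ∀ i, 0 < x i) :
    Convex ℝ (itakuraSaitoBall x r) ↔
      Convex ℝ {t : ι → ℝ | (∀ i, t i ∈ Ioi 0) ∧ ∑ i, itakuraSaitoFun (t i) ≤ r} := by
  constructor <;> intro h_conv
  · convert! h_conv.linear_preimage (LinearMap.mulLeft ℝ x) using 1
    ext t
    have h_div : x * t / x = t := funext fun i ↦ mul_div_cancel_left₀ (t i) (hx i).ne'
    simp only [mem_preimage, LinearMap.mulLeft_apply, mem_itakuraSaitoBall_iff_div hx, h_div,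
      mem_ofPred_eq]
  · convert! h_conv.linear_preimage (LinearMap.mulRight ℝ x⁻¹) using 1
    ext y
    simp only [mem_preimage, LinearMap.mulRight_apply, mem_itakuraSaitoBall_iff_div hx,
      div_eq_mul_inv, mem_ofPred_eq]

theorem convex_itakuraSaitoBall (hx : ∀ i, 0 < x i) (hr : r ≤ Real.log 2 - 1 / 2) :
    Convex ℝ (itakuraSaitoBall x r) :=
  (convex_itakuraSaitoBall_iff hx).2 <| convex_setOf_sum_apply_le
    (fun _ ↦ Ioc_subset_Ioi_self) (fun _ ↦ itakuraSaitoFun.convexOn)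
    (fun _ _ ↦ itakuraSaitoFun.nonneg)
    (fun _ _ ht h_le ↦ itakuraSaitoFun.mem_Ioc_of_le ht (h_le.trans hr))

theorem not_convex_itakuraSaitoBall [Nontrivial ι] (hx : ∀ i, 0 < x i)
    (hr : 2 * Real.log 2 - 1 < r) : ¬ Convex ℝ (itakuraSaitoBall x r) := by
  rw [convex_itakuraSaitoBall_iff hx]
  intro h_conv
  obtain ⟨b, hb, hbr, h_mid⟩ := itakuraSaitoFun.exists_add_eq_and_lt_two_mul_midpoint hr
  exact h_mid.not_ge <| two_mul_apply_midpoint_le_of_convex_setOf_sum_apply_le h_conv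
    (mem_Ioi.2 two_pos) hb hbr.le (mem_Ioi.2 one_pos) itakuraSaitoFun.apply_one

end Ball

/-- In dimension `n ≥ 2`, Itakura–Saito balls are convex for
`r² ≤ ln 2 − ½` and nonconvex for `r² > 2 ln 2 − 1`. -/
theorem itakuraSaito_ball_convexity (n : ℕ) (hn : 2 ≤ n) (r2 : ℝ) :
    (r2 ≤ Real.log 2 - 1 / 2 →
      ∀ x : Fin n → ℝ, (∀ i, 0 < x i) →
        Convex ℝ {y : Fin n → ℝ | (∀ i, 0 < y i) ∧
          ∑ i, (Real.log (y i / x i) + x i / y i - 1) ≤ r2}) ∧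
    (2 * Real.log 2 - 1 < r2 →
      ∀ x : Fin n → ℝ, (∀ i, 0 < x i) →
        ¬ Convex ℝ {y : Fin n → ℝ | (∀ i, 0 < y i) ∧
          ∑ i, (Real.log (y i / x i) + x i / y i - 1) ≤ r2}) := by
  have : Nontrivial (Fin n) := Fin.nontrivial_iff_two_le.2 hn
  exact ⟨fun hr _ hx ↦ convex_itakuraSaitoBall hx hr,
    fun hr _ hx ↦ not_convex_itakuraSaitoBall hx hr⟩
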